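/- Let θ : S → R be a ring extension admitting a reflexive homomorphism φ. Then for every right R-module Y, the map t_Y : Hom_{Rᵒᵖ}(Y,R) → Hom_{Sᵒᵖ}(Y,S) sending g to φ∘g is a bijection, and it is left S-linear (where Hom_{Rᵒᵖ}(Y,R) carries the left S-action (s·g)(y) = θ(s)·g(y) and Hom_{Sᵒᵖ}(Y,S) carries the left S-action (s·h)(y) = s·h(y)). -/

import Mathlib

/- STATEMENT 2: For a ring extension θ : S → R with reflexive homomorphism φ,
and any right R-module Y, the map t_Y : Hom_{Rᵒᵖ}(Y,R) → Hom_{Sᵒᵖ}(Y,S), g ↦ φ∘g,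
is bijective and left S-linear. -/

universe u v w

/-- `φ : R → S` is a reflexive homomorphism for the ring extension `θ : S →+* R`:
it is additive, `S`-bilinear with respect to `θ`, and the induced maps
`l_φ : R → Hom_S(R,S)`, `w ↦ (r ↦ φ (r * w))`, and `r_φ : R → Hom_{Sᵒᵖ}(R,S)`,
`w ↦ (r ↦ φ (w * r))`, are bijective (bijectivity onto the set of left,
resp. right, `S`-linear maps `R → S` is expressed elementwise). -/
def IsReflexiveHom {S : Type u} {R : Type v} [Ring S] [Ring R] (θ : S →+* R)
    (φ : R → S) : Prop :=
  (∀ a b : R, φ (a + b) = φ a + φ b) ∧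
  (∀ (s : S) (r : R), φ (θ s * r) = s * φ r) ∧
  (∀ (s : S) (r : R), φ (r * θ s) = φ r * s) ∧
  Function.Injective (fun w : R => (fun r : R => φ (r * w))) ∧
  (∀ g : R → S, ((∀ a b : R, g (a + b) = g a + g b) ∧
      ∀ (s : S) (r : R), g (θ s * r) = s * g r) → ∃ w : R, ∀ r, g r = φ (r * w)) ∧
  Function.Injective (fun w : R => (fun r : R => φ (w * r))) ∧
  (∀ g : R → S, ((∀ a b : R, g (a + b) = g a + g b) ∧
      ∀ (s : S) (r : R), g (r * θ s) = g r * s) → ∃ w : R, ∀ r, g r = φ (w * r))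

/-! `t_Y` factors as `Hom_{Rᵒᵖ}(Y, R) ≃ Hom_{Rᵒᵖ}(Y, Hom_{Sᵒᵖ}(R, S)) ≃ Hom_{Sᵒᵖ}(Y, S)`, where the
first map is composition with `r_φ` and the second is the adjunction between restriction and
coextension of scalars: bijectivity of `r_φ` says that `R`, with `φ` as counit, is the coextension
of `S` along `θ`, and `t_Y` is the bijection expressing its universal property. -/

open MulOpposite

section Coextension

variable {A B M N Y : Type*} [Semiring A] [Semiring B] [Module B A]
  [AddCommMonoid M] [Module A M] [Module B M] [IsScalarTower B A M]
  [AddCommMonoid N] [Module B N]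
  [AddCommMonoid Y] [Module A Y] [Module B Y] [IsScalarTower B A Y]

variable (A) in
/-- `M`, with `ε` as counit, is the coextension of scalars of `N` from `B` to `A`: the map
`M → Hom_B(A, N)`, `m ↦ (a ↦ ε (a • m))`, is bijective. The ring map `B → A` is encoded by the
`B`-module structure of `A`. -/
def IsCoextension (ε : M →ₗ[B] N) : Prop :=
  Function.Bijective fun m : M => ε ∘ₗ (LinearMap.toSpanSingleton A M m).restrictScalars B

namespace IsCoextension

variable {ε : M →ₗ[B] N}

theorem eq_of_forall_smul (hε : IsCoextension A ε) {m m' : M}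
    (h : ∀ a : A, ε (a • m) = ε (a • m')) : m = m' :=
  hε.injective (LinearMap.ext h)

theorem exists_forall_smul_eq (hε : IsCoextension A ε) (f : A →ₗ[B] N) :
    ∃ m : M, ∀ a : A, ε (a • m) = f a :=
  (hε.surjective f).imp fun _ hm => LinearMap.congr_fun hm

theorem injective_comp (hε : IsCoextension A ε) :
    Function.Injective fun g : Y →ₗ[A] M => ε ∘ₗ g.restrictScalars B := by
  intro g g' h
  ext y
  refine hε.eq_of_forall_smul fun a => ?_
  simpa using LinearMap.congr_fun h (a • y)

theorem surjective_comp (hε : IsCoextension A ε) :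
    Function.Surjective fun g : Y →ₗ[A] M => ε ∘ₗ g.restrictScalars B := by
  intro h
  have exists_lift (y : Y) : ∃ m : M, ∀ a : A, ε (a • m) = h (a • y) :=
    hε.exists_forall_smul_eq (h ∘ₗ (LinearMap.toSpanSingleton A Y y).restrictScalars B)
  choose f hf using exists_lift
  let g : Y →ₗ[A] M :=
    { toFun := f
      map_add' y y' := hε.eq_of_forall_smul fun a => by simp only [smul_add, map_add, hf]
      map_smul' c y := hε.eq_of_forall_smul fun a => by
        simp only [RingHom.id_apply, ← mul_smul, hf] }
  refine ⟨g, LinearMap.ext fun y => ?_⟩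
  simpa [g] using hf y 1

theorem bijective_comp (hε : IsCoextension A ε) :
    Function.Bijective fun g : Y →ₗ[A] M => ε ∘ₗ g.restrictScalars B :=
  ⟨hε.injective_comp, hε.surjective_comp⟩

end IsCoextension

end Coextension

/-- The half of `IsReflexiveHom` that concerns right modules: `φ` is an `S`-bimodule map and
`r_φ : R → Hom_{Sᵒᵖ}(R, S)` is bijective. As there, bijectivity is expressed elementwise. -/
structure IsRightReflexiveHom {S R : Type*} [Semiring S] [Semiring R] (θ : S →+* R)
    (φ : R → S) : Prop where
  map_add (a b : R) : φ (a + b) = φ a + φ b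
  map_mul_left (s : S) (r : R) : φ (θ s * r) = s * φ r
  map_mul_right (s : S) (r : R) : φ (r * θ s) = φ r * s
  injective : Function.Injective fun w r : R => φ (w * r)
  exists_eq (g : R → S) (hadd : ∀ a b : R, g (a + b) = g a + g b)
    (hmul : ∀ (s : S) (r : R), g (r * θ s) = g r * s) : ∃ w : R, ∀ r, g r = φ (w * r)

theorem IsReflexiveHom.isRightReflexiveHom {S : Type u} {R : Type v} [Ring S] [Ring R]
    {θ : S →+* R} {φ : R → S} (hφ : IsReflexiveHom θ φ) : IsRightReflexiveHom θ φ := by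
  obtain ⟨map_add, map_mul_left, map_mul_right, -, -, injective, exists_eq⟩ := hφ
  exact ⟨map_add, map_mul_left, map_mul_right, injective,
    fun g hadd hmul => exists_eq g ⟨hadd, hmul⟩⟩

namespace IsRightReflexiveHom

variable {S R : Type*} [Semiring S] [Semiring R] {θ : S →+* R} {φ : R → S}
  [Module Sᵐᵒᵖ R]

/-- A right reflexive homomorphism as a right `S`-linear map, for any `Sᵐᵒᵖ`-module structure on
`R` that agrees with restriction of scalars along `θ`. -/
def toLinearMap (hφ : IsRightReflexiveHom θ φ) (hR : ∀ (s : S) (r : R), op s • r = r * θ s) :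
    R →ₗ[Sᵐᵒᵖ] S where
  toFun := φ
  map_add' := hφ.map_add
  map_smul' s r := by
    rw [← op_unop s, hR, hφ.map_mul_right, RingHom.id_apply, op_smul_eq_mul]

theorem isCoextension_toLinearMap [IsScalarTower Sᵐᵒᵖ Rᵐᵒᵖ R] (hφ : IsRightReflexiveHom θ φ)
    (hR : ∀ (s : S) (r : R), op s • r = r * θ s) :
    IsCoextension Rᵐᵒᵖ (hφ.toLinearMap hR) := by
  refine ⟨fun w w' h => hφ.injective ?_, fun f => ?_⟩
  · funext r
    exact LinearMap.congr_fun h (op r)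
  · have map_op_mul (s : S) (r : R) : f (op (r * θ s)) = f (op r) * s := by
      rw [← hR, op_smul, map_smul, op_smul_eq_mul]
    obtain ⟨w, hw⟩ := hφ.exists_eq (f ∘ op) (fun a b => f.map_add (op a) (op b)) map_op_mul
    exact ⟨w, LinearMap.ext fun a => (hw a.unop).symm⟩

end IsRightReflexiveHom

theorem hom_iso_right_general {S R Y : Type*} [Semiring S] [Semiring R] (θ : S →+* R)
    (φ : R → S) (hφ : IsRightReflexiveHom θ φ)
    [AddCommMonoid Y] [Module Rᵐᵒᵖ Y] [Module Sᵐᵒᵖ Y]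
    (hY : ∀ (s : S) (y : Y), op s • y = op (θ s) • y)
    [Module S R] (hR : ∀ (s : S) (r : R), s • r = θ s * r) [SMulCommClass Rᵐᵒᵖ S R] :
    ∃ t : (Y →ₗ[Rᵐᵒᵖ] R) → (Y →ₗ[Sᵐᵒᵖ] S),
      (∀ (g : Y →ₗ[Rᵐᵒᵖ] R) (y : Y), t g y = φ (g y)) ∧
      Function.Bijective t ∧
      ∀ (s : S) (g : Y →ₗ[Rᵐᵒᵖ] R), t (s • g) = s • t g := by
  let : Module Sᵐᵒᵖ R := Module.compHom R θ.op
  have hRop (s : S) (r : R) : op s • r = r * θ s := rfl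
  have : IsScalarTower Sᵐᵒᵖ Rᵐᵒᵖ R := ⟨fun _ _ _ => (mul_assoc _ _ _).symm⟩
  have : IsScalarTower Sᵐᵒᵖ Rᵐᵒᵖ Y := ⟨fun s a y => by
    rw [← op_unop s, hY, ← mul_smul]
    rfl⟩
  refine ⟨fun g => hφ.toLinearMap hRop ∘ₗ g.restrictScalars Sᵐᵒᵖ, fun _ _ => rfl,
    (hφ.isCoextension_toLinearMap hRop).bijective_comp, fun s g => LinearMap.ext fun y => ?_⟩
  change φ (s • g y) = s * φ (g y)
  rw [hR, hφ.map_mul_left]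

theorem hom_iso_right {S : Type u} {R : Type v} [Ring S] [Ring R] (θ : S →+* R)
    (φ : R → S) (hφ : IsReflexiveHom θ φ)
    -- a right R-module Y, with right S-module structure by restriction of scalars along θ
    (Y : Type w) [AddCommGroup Y] [Module Rᵐᵒᵖ Y]
    [Module Sᵐᵒᵖ Y]
    (hY : ∀ (s : S) (y : Y), MulOpposite.op s • y = MulOpposite.op (θ s) • y)
    -- the left S-module structure on R by restriction of scalars along θ
    [Module S R] (hR : ∀ (s : S) (r : R), s • r = θ s * r)
    [SMulCommClass Rᵐᵒᵖ S R] :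
    ∃ t : (Y →ₗ[Rᵐᵒᵖ] R) → (Y →ₗ[Sᵐᵒᵖ] S),
      (∀ (g : Y →ₗ[Rᵐᵒᵖ] R) (y : Y), t g y = φ (g y)) ∧
      Function.Bijective t ∧
      -- left S-linearity of t
      ∀ (s : S) (g : Y →ₗ[Rᵐᵒᵖ] R), t (s • g) = s • t g :=
  hom_iso_right_general θ φ hφ.isRightReflexiveHom hY hR
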